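/- Assume M ≥ 2. There exist C > 0 and x₀ (depending only on δ, M, K, ξ) such that for all x ≥ x₀, every integer N, every H ∈ 𝔥₂ and every j ∈ {1, 2}: |E[∑_{q ∈ Q_H} (∑_{−y ≤ n < Ky} λ*_b(H; q, n))^j] − ((K+1)y)^j·#Q_H| ≤ C·((K+1)y)^j·#Q_H / H^{M−2}. -/

import Mathlib

open scoped Classical

noncomputable def yy (δ x : ℝ) : ℕ := ⌈x * Real.log x ^ δ⌉₊

noncomputable def zz (δ x : ℝ) : ℝ :=
  (yy δ x : ℝ) * Real.log (Real.log x) ^ 2 / Real.log x ^ (1/2 : ℝ)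

noncomputable def primesUpTo (t : ℝ) : Finset ℕ :=
  (Finset.range (⌊t⌋₊ + 1)).filter fun p => p.Prime ∧ (p : ℝ) ≤ t

noncomputable def PP (t : ℝ) : ℕ := ∏ p ∈ primesUpTo t, p

noncomputable def sigUpTo (t : ℝ) : ℝ := ∏ p ∈ primesUpTo t, (1 - 1 / (p : ℝ))

noncomputable def primesBetween (w t : ℝ) : Finset ℕ :=
  (Finset.range (⌊t⌋₊ + 1)).filter fun p => p.Prime ∧ w < (p : ℝ) ∧ (p : ℝ) ≤ t

noncomputable def sigBetween (w t : ℝ) : ℝ := ∏ p ∈ primesBetween w t, (1 - 1 / (p : ℝ))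

def inS (t : ℝ) (b n : ℤ) : Prop :=
  ∀ p : ℕ, p.Prime → (p : ℝ) ≤ t → ¬ ((p : ℤ) ∣ (n - b))

def inSBetween (w t : ℝ) (b n : ℤ) : Prop :=
  ∀ p : ℕ, p.Prime → w < (p : ℝ) → (p : ℝ) ≤ t → ¬ ((p : ℤ) ∣ (n - b))

noncomputable def countS (t : ℝ) (b lo hi : ℤ) : ℕ :=
  ((Finset.Icc lo hi).filter (inS t b)).card

noncomputable def EE (δ x : ℝ) (g : ℤ → ℝ) : ℝ :=
  (1 / (PP (zz δ x) : ℝ)) * ∑ b ∈ Finset.range (PP (zz δ x)), g (b : ℤ)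

def frakH (δ ξ x : ℝ) : Set ℝ :=
  {H | ∃ j : ℕ, H = ξ ^ j ∧ 2 * (yy δ x : ℝ) / x ≤ H ∧ H ≤ (yy δ x : ℝ) / (ξ * zz δ x)}

def frakH1 (δ ξ x : ℝ) : Set ℝ :=
  {H | ∃ j : ℕ, Even j ∧ H = ξ ^ j ∧ 2 * (yy δ x : ℝ) / x ≤ H ∧ H ≤ (yy δ x : ℝ) / (ξ * zz δ x)}

def frakH2 (δ ξ x : ℝ) : Set ℝ :=
  {H | ∃ j : ℕ, Odd j ∧ H = ξ ^ j ∧ 2 * (yy δ x : ℝ) / x ≤ H ∧ H ≤ (yy δ x : ℝ) / (ξ * zz δ x)}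

noncomputable def QH (δ ξ x H : ℝ) : Finset ℕ :=
  (Finset.range (⌊(yy δ x : ℝ) / H⌋₊ + 1)).filter fun q =>
    q.Prime ∧ (yy δ x : ℝ) / (ξ * H) < (q : ℝ) ∧ (q : ℝ) ≤ (yy δ x : ℝ) / H

noncomputable def Hq (δ ξ x : ℝ) (q : ℕ) : ℝ :=
  if h : ∃ H ∈ frakH δ ξ x, (yy δ x : ℝ) / (ξ * H) < (q : ℝ) ∧ (q : ℝ) ≤ (yy δ x : ℝ) / H
  then h.choose else 1

noncomputable def APset (M : ℝ) (K : ℕ) (b : ℤ) (H : ℝ) (q : ℕ) (n : ℤ) : Finset ℤ :=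
  ((Finset.Icc 1 ⌊(K : ℝ) * H⌋₊).image fun h : ℕ => n + (q : ℤ) * (h : ℤ)).filter (inS (H ^ M) b)

noncomputable def lam (M zv : ℝ) (K : ℕ) (b : ℤ) (H : ℝ) (q : ℕ) (n : ℤ) : ℝ :=
  if ∀ m ∈ APset M K b H q n, inSBetween (H ^ M) zv b m
  then sigBetween (H ^ M) zv ^ (-((APset M K b H q n).card : ℤ))
  else 0

noncomputable def APsetStar (M : ℝ) (K : ℕ) (N b : ℤ) (H : ℝ) (q : ℕ) (n : ℤ) : Finset ℤ :=
  ((Finset.Icc 1 ⌊(K : ℝ) * H⌋₊).image fun h : ℕ => n - (q : ℤ) * (h : ℤ)).filter (inS (H ^ M) (-N - b))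

noncomputable def lamStar (M zv : ℝ) (K : ℕ) (N b : ℤ) (H : ℝ) (q : ℕ) (n : ℤ) : ℝ :=
  if ∀ m ∈ APsetStar M K N b H q n, inSBetween (H ^ M) zv (-N - b) m
  then sigBetween (H ^ M) zv ^ (-((APsetStar M K N b H q n).card : ℤ))
  else 0

/-!
By the Chinese remainder theorem, averages over `b` modulo `PP z` of products of the weights
`lamStar` are averages over `b` modulo `PP w`, where `w = H ^ M`, of singular series truncated to
the primes in `(w, z]`. Put `R = ⌊K * H⌋₊`.

For one progression the factor at `p` is at least `1 - R ^ 2 / p ^ 2`, which bounds the first moment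
below by `L * (1 - 2 * R ^ 2 / w)`, where `L` is the number of values of `n`. For two progressions,
based at `n₁` and `n₂`, the factor at `p` exceeds `1` only if `p` divides `n₁ - n₂ - q * l` for some
`|l| ≤ R`. If no such number vanishes, the AM-GM inequality over `l` reduces the correlation to a
multiplicative function of a single `n₁ - n₂ - q * l`, whose mean value is `1 + O(R ^ 2 / w)` by
expansion over divisors. The few remaining pairs are handled by Mertens' bound: each contributes at
most `sigBetween w z ^ (-R) = x ^ o(1)`, because `R` is at most a constant times `√(log x)`. So the
second moment is at most `L ^ 2 * (1 + O(H ^ (2 - M)))`, and Cauchy–Schwarz,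
`(𝔼 X) ^ 2 ≤ 𝔼 (X ^ 2)`, supplies the two missing bounds.
-/

section CRT

open Finset Function
open scoped BigOperators

variable {𝕜 : Type*} [Field 𝕜] [CharZero 𝕜]

lemma expect_range_mul_of_periodic {P Q : ℕ} (hP : P ≠ 0) (hQ : Q ≠ 0) (h : P.Coprime Q)
    {F : ℕ → ℕ → 𝕜} (hF₁ : ∀ c, Periodic (F · c) P) (hF₂ : ∀ a, Periodic (F a) Q) :
    𝔼 b ∈ range (P * Q), F b b = 𝔼 a ∈ range P, 𝔼 c ∈ range Q, F a c := by
  have hmod (b : ℕ) : F (b % P) (b % Q) = F b b := by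
    rw [(hF₂ _).map_mod_nat, (hF₁ _).map_mod_nat]
  have hinj : Set.InjOn (fun b : ℕ => (b % P, b % Q)) (range (P * Q)) := by
    intro a ha b hb hab
    simp only [Prod.mk.injEq] at hab
    have hmodEq : a ≡ b [MOD P * Q] := (Nat.modEq_and_modEq_iff_modEq_mul h).1 hab
    exact hmodEq.eq_of_lt_of_lt (by simpa using ha) (by simpa using hb)
  have himg : (range (P * Q)).image (fun b : ℕ => (b % P, b % Q)) = range P ×ˢ range Q := by
    refine eq_of_subset_of_card_le (fun u hu => ?_) (by simp [card_image_of_injOn hinj])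
    obtain ⟨b, -, rfl⟩ := mem_image.1 hu
    simp [Nat.mod_lt, Nat.pos_of_ne_zero hP, Nat.pos_of_ne_zero hQ]
  rw [← expect_product' (range P) (range Q) F, ← himg, expect_image hinj]
  simp only [hmod]

lemma expect_range_prod_of_periodic {ι : Type*} (T : Finset ι) {m : ι → ℕ}
    (hm : ∀ i ∈ T, m i ≠ 0) (hcop : (T : Set ι).Pairwise (Nat.Coprime on m)) {g : ι → ℕ → 𝕜}
    (hg : ∀ i ∈ T, Periodic (g i) (m i)) :
    𝔼 c ∈ range (∏ i ∈ T, m i), ∏ i ∈ T, g i c = ∏ i ∈ T, 𝔼 r ∈ range (m i), g i r := by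
  induction T using Finset.induction_on with
  | empty => simp
  | insert i T hi ih =>
    have hT : T ⊆ insert i T := subset_insert i T
    have hiT : i ∈ insert i T := mem_insert_self i T
    have hcop_i : (m i).Coprime (∏ j ∈ T, m j) := Nat.Coprime.prod_right fun j hj =>
      hcop hiT (hT hj) fun e => hi (e ▸ hj)
    have hper : Periodic (fun c => ∏ j ∈ T, g j c) (∏ j ∈ T, m j) := fun c =>
      prod_congr rfl fun j hj => by
        obtain ⟨k, hk⟩ := dvd_prod_of_mem m hj
        rw [hk, mul_comm]
        exact (hg j (hT hj)).nat_mul k c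
    simp only [prod_insert hi]
    rw [expect_range_mul_of_periodic (F := fun a c => g i a * ∏ j ∈ T, g j c) (hm i hiT)
      (prod_ne_zero_iff.2 fun j hj => hm j (hT hj)) hcop_i
      (fun c a => congrArg (· * _) (hg i hiT a)) (fun a c => congrArg (g i a * ·) (hper c)),
      ← ih (fun j hj => hm j (hT hj)) (hcop.mono (coe_subset.2 hT)) fun j hj => hg j (hT hj),
      expect_mul_expect]

end CRT

section Primes

open Finset

variable {w z : ℝ} {p : ℕ}

lemma mem_primesUpTo : p ∈ primesUpTo z ↔ p.Prime ∧ (p : ℝ) ≤ z := by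
  simp only [primesUpTo, mem_filter, mem_range, and_iff_right_iff_imp]
  exact fun h => Nat.lt_succ_of_le (Nat.le_floor h.2)

lemma mem_primesBetween : p ∈ primesBetween w z ↔ p.Prime ∧ w < p ∧ (p : ℝ) ≤ z := by
  simp only [primesBetween, mem_filter, mem_range, and_iff_right_iff_imp]
  exact fun h => Nat.lt_succ_of_le (Nat.le_floor h.2.2)

lemma PP_ne_zero (t : ℝ) : PP t ≠ 0 :=
  prod_ne_zero_iff.2 fun _ hp => (mem_primesUpTo.1 hp).1.ne_zero

lemma PP_eq_mul (hwz : w ≤ z) : PP z = PP w * ∏ p ∈ primesBetween w z, p := by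
  have hdisj : Disjoint (primesUpTo w) (primesBetween w z) := disjoint_left.2 fun p hp hp' =>
    (mem_primesUpTo.1 hp).2.not_gt (mem_primesBetween.1 hp').2.1
  rw [PP, PP, ← prod_union hdisj]
  congr 1
  ext p
  rw [mem_union, mem_primesUpTo, mem_primesUpTo, mem_primesBetween]
  have : (p : ℝ) ≤ z ↔ (p : ℝ) ≤ w ∨ w < p ∧ (p : ℝ) ≤ z :=
    ⟨fun h => (le_or_gt (p : ℝ) w).imp_right fun h' => ⟨h', h⟩,
      fun h => h.elim (·.trans hwz) (·.2)⟩
  rw [this]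
  tauto

lemma coprime_PP_prod_primesBetween (w z : ℝ) : (PP w).Coprime (∏ p ∈ primesBetween w z, p) := by
  refine Nat.Coprime.prod_left fun p hp => Nat.Coprime.prod_right fun q hq => ?_
  obtain ⟨hp, hpw⟩ := mem_primesUpTo.1 hp
  obtain ⟨hq, hwq, -⟩ := mem_primesBetween.1 hq
  exact (Nat.coprime_primes hp hq).2 fun h => (hpw.trans_lt hwq).ne (congrArg _ h)

lemma one_sub_inv_pos (hp : p.Prime) : (0 : ℝ) < 1 - 1 / p := by
  rw [sub_pos, div_lt_one (by exact_mod_cast hp.pos)]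
  exact_mod_cast hp.one_lt

lemma sigBetween_pos (w z : ℝ) : 0 < sigBetween w z :=
  prod_pos fun _ hp => one_sub_inv_pos (mem_primesBetween.1 hp).1

lemma sigBetween_zpow_neg (w z : ℝ) (k : ℕ) :
    sigBetween w z ^ (-(k : ℤ)) = ∏ p ∈ primesBetween w z, ((1 - 1 / (p : ℝ)) ^ k)⁻¹ := by
  rw [zpow_neg, zpow_natCast, sigBetween, ← prod_pow, prod_inv_distrib]

lemma sum_primesBetween_inv_sq_le (hw : 0 < w) :
    ∑ p ∈ primesBetween w z, ((p : ℝ) ^ 2)⁻¹ ≤ 2 / w := by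
  have hsub : primesBetween w z ⊆ Ioo ⌊w⌋₊ (⌊z⌋₊ + 1) := fun p hp => by
    obtain ⟨-, hwp, hpz⟩ := mem_primesBetween.1 hp
    exact mem_Ioo.2 ⟨(Nat.floor_lt hw.le).2 hwp, Nat.lt_succ_of_le (Nat.le_floor hpz)⟩
  calc ∑ p ∈ primesBetween w z, ((p : ℝ) ^ 2)⁻¹
      ≤ ∑ p ∈ Ioo ⌊w⌋₊ (⌊z⌋₊ + 1), ((p : ℝ) ^ 2)⁻¹ :=
        sum_le_sum_of_subset_of_nonneg hsub fun _ _ _ => by positivity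
    _ ≤ 2 / (⌊w⌋₊ + 1) := sum_Ioo_inv_sq_le _ _
    _ ≤ 2 / w := by gcongr; exact (Nat.lt_floor_add_one w).le

end Primes

section Sieve

open Finset Function
open scoped BigOperators

/-- The number of residue classes modulo `p` met by the finite set `A`. -/
noncomputable def residueCount (p : ℕ) (A : Finset ℤ) : ℕ :=
  #(A.image fun m : ℤ => (m : ZMod p))

lemma residueCount_le_card (p : ℕ) (A : Finset ℤ) : residueCount p A ≤ #A := card_image_le

lemma residueCount_le (p : ℕ) [NeZero p] (A : Finset ℤ) : residueCount p A ≤ p :=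
  (card_le_univ _).trans (ZMod.card p).le

lemma expect_range_avoid (p : ℕ) [NeZero p] (c : ℤ) (A : Finset ℤ) :
    𝔼 r ∈ range p, (if ∀ m ∈ A, ¬ (p : ℤ) ∣ m - (c - (r : ℤ)) then (1 : ℝ) else 0)
      = 1 - residueCount p A / p := by
  have hp : (p : ℝ) ≠ 0 := NeZero.ne _
  have havoid (r : ℕ) : (∀ m ∈ A, ¬ (p : ℤ) ∣ m - (c - (r : ℤ))) ↔
      (c : ZMod p) - r ∉ A.image fun m : ℤ => (m : ZMod p) := by
    simp only [mem_image, not_exists, not_and, ← ZMod.intCast_zmod_eq_zero_iff_dvd, Int.cast_sub,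
      Int.cast_natCast, sub_eq_zero]
  have hcard : #((range p).filter fun r : ℕ => ∀ m ∈ A, ¬ (p : ℤ) ∣ m - (c - (r : ℤ)))
      = p - residueCount p A :=
    calc #((range p).filter fun r : ℕ => ∀ m ∈ A, ¬ (p : ℤ) ∣ m - (c - (r : ℤ)))
        = #(A.image fun m : ℤ => (m : ZMod p))ᶜ :=
          card_nbij' (fun r => (c : ZMod p) - r) (fun s => ((c : ZMod p) - s).val)
            (fun r hr => mem_coe.2 <| mem_compl.2 <| (havoid r).1 (mem_filter.1 hr).2)
            (fun s hs => mem_coe.2 <| mem_filter.2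
              ⟨mem_range.2 (ZMod.val_lt _), (havoid _).2 (by simpa using hs)⟩)
            (fun r hr => by simpa using ZMod.val_cast_of_lt (mem_range.1 (mem_filter.1 hr).1))
            (fun s _ => by simp)
      _ = p - residueCount p A := by rw [card_compl, ZMod.card, residueCount]
  rw [expect_eq_sum_div_card, sum_boole, hcard, card_range, Nat.cast_sub (residueCount_le p A),
    sub_div, div_self hp]

/-- The factors at the primes in `(w, z]` of the Hardy–Littlewood singular series of `A`. The
exponent `k` is kept separate from `#A`, since for a pair of overlapping sets `A₁`, `A₂` the series
of `A₁ ∪ A₂` occurs normalised by `k = #A₁ + #A₂`. -/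
noncomputable def truncSingularSeries (w z : ℝ) (k : ℕ) (A : Finset ℤ) : ℝ :=
  ∏ p ∈ primesBetween w z, (1 - (residueCount p A : ℝ) / p) * ((1 - 1 / (p : ℝ)) ^ k)⁻¹

/-- The normalised indicator that every element of `A` surviving the sieve by the primes up to `w`
also survives the primes in `(w, z]`, where the sieve removes the class of `c` modulo each prime.
For `A` a progression of step `-q` this is the weight `lamStar`. -/
noncomputable def sieveWeight (w z : ℝ) (c : ℤ) (A : Finset ℤ) : ℝ :=
  if ∀ m ∈ A.filter (inS w c), inSBetween w z c m
  then sigBetween w z ^ (-(#(A.filter (inS w c)) : ℤ)) else 0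

variable {w z : ℝ}

lemma natCast_dvd_sub_sub_add_iff {p P : ℕ} (h : p ∣ P) (m c : ℤ) (b : ℕ) :
    (p : ℤ) ∣ m - (c - ((b + P : ℕ) : ℤ)) ↔ (p : ℤ) ∣ m - (c - (b : ℤ)) := by
  have hP : (p : ℤ) ∣ (P : ℤ) := by exact_mod_cast h
  have hsplit : m - (c - ((b + P : ℕ) : ℤ)) = m - (c - (b : ℤ)) + P := by push_cast; ring
  rw [hsplit, dvd_add_left hP]

lemma periodic_filter_inS (w : ℝ) (c : ℤ) (A : Finset ℤ) :
    Periodic (fun b : ℕ => A.filter (inS w (c - b))) (PP w) := fun b =>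
  filter_congr fun m _ => forall₃_congr fun _ hp hpw => not_congr <|
    natCast_dvd_sub_sub_add_iff (dvd_prod_of_mem _ (mem_primesUpTo.2 ⟨hp, hpw⟩)) m c b

lemma ite_inSBetween_eq_prod (w z : ℝ) (c : ℤ) (A : Finset ℤ) :
    (if ∀ m ∈ A, inSBetween w z c m then (1 : ℝ) else 0)
      = ∏ p ∈ primesBetween w z, if ∀ m ∈ A, ¬ (p : ℤ) ∣ m - c then 1 else 0 := by
  rw [prod_ite_zero, prod_const_one]
  congr 1
  simp only [inSBetween, mem_primesBetween, eq_iff_iff]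
  exact ⟨fun h p hp m hm => h m hm p hp.1 hp.2.1 hp.2.2,
    fun h m hm p hp hwp hpz => h p ⟨hp, hwp, hpz⟩ m hm⟩

lemma expect_ite_inSBetween (hwz : w ≤ z) (c : ℤ) {B : ℕ → Finset ℤ} {W : ℕ → ℝ}
    (hB : Periodic B (PP w)) (hW : Periodic W (PP w)) :
    𝔼 b ∈ range (PP z), (if ∀ m ∈ B b, inSBetween w z (c - (b : ℤ)) m then W b else 0)
      = 𝔼 a ∈ range (PP w),
          W a * ∏ p ∈ primesBetween w z, (1 - (residueCount p (B a) : ℝ) / p) := by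
  set g : ℕ → ℕ → ℕ → ℝ := fun a p r =>
    if ∀ m ∈ B a, ¬ (p : ℤ) ∣ m - (c - (r : ℤ)) then 1 else 0 with hg
  have hprime : ∀ p ∈ primesBetween w z, p.Prime := fun p hp => (mem_primesBetween.1 hp).1
  have hper {p P : ℕ} (h : p ∣ P) (a : ℕ) : Periodic (g a p) P := fun r => by
    simp only [hg, natCast_dvd_sub_sub_add_iff h]
  have hfactor (b : ℕ) : (if ∀ m ∈ B b, inSBetween w z (c - (b : ℤ)) m then W b else 0)
      = W b * ∏ p ∈ primesBetween w z, g b p b := by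
    rw [← ite_inSBetween_eq_prod, mul_ite, mul_one, mul_zero]
  simp only [hfactor]
  rw [PP_eq_mul hwz, expect_range_mul_of_periodic
    (F := fun a b => W a * ∏ p ∈ primesBetween w z, g a p b) (PP_ne_zero w)
    (prod_ne_zero_iff.2 fun p hp => (hprime p hp).ne_zero) (coprime_PP_prod_primesBetween w z)
    (fun b a => by simp only [hg, hW a, hB a])
    (fun a b => congrArg (W a * ·) <|
      prod_congr rfl fun p hp => hper (dvd_prod_of_mem _ hp) a b)]
  refine expect_congr rfl fun a _ => ?_
  rw [← mul_expect, expect_range_prod_of_periodic _ (fun p hp => (hprime p hp).ne_zero)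
    (fun p hp q hq hpq => (Nat.coprime_primes (hprime p hp) (hprime q hq)).2 hpq)
    fun p _ => hper dvd_rfl a]
  refine congrArg (W a * ·) (prod_congr rfl fun p hp => ?_)
  have : NeZero p := ⟨(hprime p hp).ne_zero⟩
  exact expect_range_avoid p c (B a)

lemma expect_sieveWeight_mul (hwz : w ≤ z) (c : ℤ) (A₁ A₂ : Finset ℤ) :
    𝔼 b ∈ range (PP z), sieveWeight w z (c - (b : ℤ)) A₁ * sieveWeight w z (c - (b : ℤ)) A₂
      = 𝔼 a ∈ range (PP w), truncSingularSeries w z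
          (#(A₁.filter (inS w (c - (a : ℤ)))) + #(A₂.filter (inS w (c - (a : ℤ)))))
          (A₁.filter (inS w (c - (a : ℤ))) ∪ A₂.filter (inS w (c - (a : ℤ)))) := by
  have hmul (b : ℕ) : sieveWeight w z (c - (b : ℤ)) A₁ * sieveWeight w z (c - (b : ℤ)) A₂
      = if ∀ m ∈ A₁.filter (inS w (c - (b : ℤ))) ∪ A₂.filter (inS w (c - (b : ℤ))),
          inSBetween w z (c - (b : ℤ)) m
        then sigBetween w z ^ (-((#(A₁.filter (inS w (c - (b : ℤ)))) +
          #(A₂.filter (inS w (c - (b : ℤ)))) : ℕ) : ℤ)) else 0 := by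
    simp only [sieveWeight, forall_mem_union, ite_and, Nat.cast_add, neg_add,
      zpow_add₀ (sigBetween_pos w z).ne']
    split_ifs <;> simp only [mul_zero, zero_mul]
  have h₁ := periodic_filter_inS w c A₁
  have h₂ := periodic_filter_inS w c A₂
  simp only [hmul]
  rw [expect_ite_inSBetween hwz c (fun b => congrArg₂ (· ∪ ·) (h₁ b) (h₂ b))
    (fun b => congrArg₂ (fun B₁ B₂ => sigBetween w z ^ (-((#B₁ + #B₂ : ℕ) : ℤ))) (h₁ b) (h₂ b))]
  simp only [sigBetween_zpow_neg, truncSingularSeries, prod_mul_distrib, mul_comm]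

lemma expect_sieveWeight (hwz : w ≤ z) (c : ℤ) (A : Finset ℤ) :
    𝔼 b ∈ range (PP z), sieveWeight w z (c - (b : ℤ)) A
      = 𝔼 a ∈ range (PP w), truncSingularSeries w z
          #(A.filter (inS w (c - (a : ℤ)))) (A.filter (inS w (c - (a : ℤ)))) := by
  simpa [sieveWeight] using expect_sieveWeight_mul hwz c A ∅

end Sieve

section LocalFactors

open Finset
open scoped BigOperators

variable {w z : ℝ} {p : ℕ}

lemma one_sub_div_le_one_sub_inv_pow (hp : 1 ≤ p) (k : ℕ) :
    1 - (k : ℝ) / p ≤ (1 - 1 / (p : ℝ)) ^ k := by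
  have h : 1 / (p : ℝ) ≤ 1 := by
    rw [div_le_one (by exact_mod_cast hp)]
    exact_mod_cast hp
  calc 1 - (k : ℝ) / p = 1 + k * -(1 / (p : ℝ)) := by ring
    _ ≤ (1 + -(1 / (p : ℝ))) ^ k := one_add_mul_le_pow (by linarith) k
    _ = _ := by rw [← sub_eq_add_neg]

lemma one_sub_sq_div_sq_le (hp : p.Prime) {k : ℕ} (hk : k ≤ p) :
    1 - (k : ℝ) ^ 2 / (p : ℝ) ^ 2 ≤ (1 - k / p) * ((1 - 1 / (p : ℝ)) ^ k)⁻¹ := by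
  have hp0 : (0 : ℝ) < p := by exact_mod_cast hp.pos
  have hpos := one_sub_inv_pos hp
  have hkp : 0 ≤ 1 - (k : ℝ) / p := by
    rw [sub_nonneg, div_le_one hp0]
    exact_mod_cast hk
  have hprod : (1 + 1 / (p : ℝ)) ^ k * (1 - 1 / (p : ℝ)) ^ k ≤ 1 := by
    rw [← mul_pow]
    exact pow_le_one₀ (by positivity) (by nlinarith [sq_nonneg (1 / (p : ℝ))])
  have hinv : 1 + (k : ℝ) / p ≤ ((1 - 1 / (p : ℝ)) ^ k)⁻¹ :=
    calc 1 + (k : ℝ) / p = 1 + k * (1 / (p : ℝ)) := by ring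
      _ ≤ (1 + 1 / (p : ℝ)) ^ k := one_add_mul_le_pow (by linarith [one_div_pos.2 hp0]) k
      _ ≤ ((1 - 1 / (p : ℝ)) ^ k)⁻¹ := by
        rwa [← one_div ((1 - 1 / (p : ℝ)) ^ k), le_div_iff₀ (by positivity)]
  calc 1 - (k : ℝ) ^ 2 / (p : ℝ) ^ 2 = (1 - k / p) * (1 + k / p) := by ring
    _ ≤ _ := mul_le_mul_of_nonneg_left hinv hkp

lemma one_sub_div_mul_inv_le (hp : p.Prime) {v k e : ℕ} (h : k ≤ v + e) :
    (1 - (v : ℝ) / p) * ((1 - 1 / (p : ℝ)) ^ k)⁻¹ ≤ ((1 - 1 / (p : ℝ)) ^ e)⁻¹ := by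
  have hpos := one_sub_inv_pos hp
  have hle : 1 - 1 / (p : ℝ) ≤ 1 := sub_le_self _ (by positivity)
  rw [← div_eq_mul_inv, div_le_iff₀ (by positivity), inv_mul_eq_div, le_div_iff₀ (by positivity)]
  calc (1 - (v : ℝ) / p) * (1 - 1 / (p : ℝ)) ^ e
      ≤ (1 - 1 / (p : ℝ)) ^ v * (1 - 1 / (p : ℝ)) ^ e := by
        gcongr
        exact one_sub_div_le_one_sub_inv_pow hp.one_le v
    _ = (1 - 1 / (p : ℝ)) ^ (v + e) := (pow_add _ _ _).symm
    _ ≤ (1 - 1 / (p : ℝ)) ^ k := pow_le_pow_of_le_one hpos.le hle h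

lemma one_sub_residueCount_div_nonneg (hp : p.Prime) (A : Finset ℤ) :
    0 ≤ 1 - (residueCount p A : ℝ) / p := by
  have : NeZero p := ⟨hp.ne_zero⟩
  rw [sub_nonneg, div_le_one (by exact_mod_cast hp.pos)]
  exact_mod_cast residueCount_le p A

lemma one_sub_sum_le_prod_one_sub {ι : Type*} (s : Finset ι) {a : ι → ℝ}
    (ha₀ : ∀ i ∈ s, 0 ≤ a i) (ha₁ : ∀ i ∈ s, a i ≤ 1) :
    1 - ∑ i ∈ s, a i ≤ ∏ i ∈ s, (1 - a i) := by
  induction s using Finset.induction_on with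
  | empty => simp
  | insert i s hi ih =>
    rw [forall_mem_insert] at ha₀ ha₁
    rw [sum_insert hi, prod_insert hi]
    nlinarith [mul_le_mul_of_nonneg_left (ih ha₀.2 ha₁.2) (sub_nonneg.2 ha₁.1),
      mul_nonneg ha₀.1 (sum_nonneg ha₀.2)]

lemma le_truncSingularSeries_card (hw : 0 < w) {A : Finset ℤ} {R : ℕ} (hA : #A ≤ R)
    (hR : (R : ℝ) ≤ w) : 1 - 2 * (R : ℝ) ^ 2 / w ≤ truncSingularSeries w z #A A := by
  have hRp : ∀ p ∈ primesBetween w z, (R : ℝ) ≤ p := fun p hp =>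
    hR.trans (mem_primesBetween.1 hp).2.1.le
  have hle : ∀ p ∈ primesBetween w z, (R : ℝ) ^ 2 / (p : ℝ) ^ 2 ≤ 1 := fun p hp =>
    div_le_one_of_le₀ (pow_le_pow_left₀ (by positivity) (hRp p hp) 2) (by positivity)
  have hlocal : ∀ p ∈ primesBetween w z, 1 - (R : ℝ) ^ 2 / (p : ℝ) ^ 2
      ≤ (1 - (residueCount p A : ℝ) / p) * ((1 - 1 / (p : ℝ)) ^ #A)⁻¹ := fun p hp => by
    have hpp := (mem_primesBetween.1 hp).1
    have hpos := one_sub_inv_pos hpp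
    have hAp : #A ≤ p := hA.trans (by exact_mod_cast hRp p hp)
    have hν : (residueCount p A : ℝ) ≤ #A := by exact_mod_cast residueCount_le_card p A
    have hAR : (#A : ℝ) ≤ R := by exact_mod_cast hA
    calc 1 - (R : ℝ) ^ 2 / (p : ℝ) ^ 2 ≤ 1 - (#A : ℝ) ^ 2 / (p : ℝ) ^ 2 := by gcongr
      _ ≤ (1 - #A / p) * ((1 - 1 / (p : ℝ)) ^ #A)⁻¹ := one_sub_sq_div_sq_le hpp hAp
      _ ≤ _ := by gcongr
  calc 1 - 2 * (R : ℝ) ^ 2 / w = 1 - (R : ℝ) ^ 2 * (2 / w) := by ring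
    _ ≤ 1 - (R : ℝ) ^ 2 * ∑ p ∈ primesBetween w z, ((p : ℝ) ^ 2)⁻¹ := by
        gcongr
        exact sum_primesBetween_inv_sq_le hw
    _ = 1 - ∑ p ∈ primesBetween w z, (R : ℝ) ^ 2 / (p : ℝ) ^ 2 := by
        simp only [mul_sum, div_eq_mul_inv]
    _ ≤ ∏ p ∈ primesBetween w z, (1 - (R : ℝ) ^ 2 / (p : ℝ) ^ 2) :=
        one_sub_sum_le_prod_one_sub _ (fun _ _ => by positivity) hle
    _ ≤ _ := prod_le_prod (fun p hp => sub_nonneg.2 (hle p hp)) hlocal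

lemma one_sub_le_expect_sieveWeight (hw : 0 < w) (hwz : w ≤ z) (c : ℤ) {A : Finset ℤ} {R : ℕ}
    (hA : #A ≤ R) (hR : (R : ℝ) ≤ w) :
    1 - 2 * (R : ℝ) ^ 2 / w ≤ 𝔼 b ∈ range (PP z), sieveWeight w z (c - (b : ℤ)) A := by
  rw [expect_sieveWeight hwz]
  exact le_expect (nonempty_range_iff.2 (PP_ne_zero w)) fun a _ =>
    le_truncSingularSeries_card hw ((card_filter_le _ _).trans hA) hR

end LocalFactors

section Collisions

open Finset
open scoped BigOperators

variable {w z : ℝ} {p q R : ℕ}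

lemma residueCount_eq_card {A : Finset ℤ} (hA : Set.InjOn (fun m : ℤ => (m : ZMod p)) A) :
    residueCount p A = #A :=
  card_image_of_injOn hA

lemma residueCount_mono {A B : Finset ℤ} (h : A ⊆ B) : residueCount p A ≤ residueCount p B :=
  card_le_card (image_subset_image h)

lemma residueCount_union_of_disjoint {A₁ A₂ : Finset ℤ}
    (h : Disjoint (A₁.image fun m : ℤ => (m : ZMod p)) (A₂.image fun m : ℤ => (m : ZMod p))) :
    residueCount p (A₁ ∪ A₂) = residueCount p A₁ + residueCount p A₂ := by
  rw [residueCount, image_union, card_union_of_disjoint h, residueCount, residueCount]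

/-- The progression `n - q, n - 2q, …, n - Rq`. -/
def progression (q R : ℕ) (n : ℤ) : Finset ℤ :=
  (Icc 1 R).image fun h : ℕ => n - q * h

lemma card_progression_le (q R : ℕ) (n : ℤ) : #(progression q R n) ≤ R :=
  card_image_le.trans (by simp)

lemma injOn_intCast_progression (hpq : p.Coprime q) (hR : R ≤ p) (n : ℤ) :
    Set.InjOn (fun m : ℤ => (m : ZMod p)) (progression q R n) := by
  intro m hm m' hm' h
  obtain ⟨i, hi, rfl⟩ := mem_image.1 hm
  obtain ⟨j, hj, rfl⟩ := mem_image.1 hm'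
  rw [mem_Icc] at hi hj
  have hdvd : (p : ℤ) ∣ q * ((i : ℤ) - j) := by
    convert (ZMod.intCast_eq_intCast_iff_dvd_sub _ _ _).1 h using 1
    ring
  have hij : (i : ℤ) - j = 0 := Int.eq_zero_of_abs_lt_dvd
    ((Nat.isCoprime_iff_coprime.2 hpq).dvd_of_dvd_mul_left hdvd) (abs_lt.2 (by omega))
  rw [sub_eq_zero.1 hij]

lemma disjoint_image_progression {n₁ n₂ : ℤ}
    (h : ∀ l ∈ Icc (-(R : ℤ)) R, ¬ (p : ℤ) ∣ n₁ - n₂ - q * l) :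
    Disjoint ((progression q R n₁).image fun m : ℤ => (m : ZMod p))
      ((progression q R n₂).image fun m : ℤ => (m : ZMod p)) := by
  rw [disjoint_left]
  intro s h₁ h₂
  simp only [progression, mem_image, exists_exists_and_eq_and, mem_Icc] at h₁ h₂
  obtain ⟨i, hi, rfl⟩ := h₁
  obtain ⟨j, hj, hij⟩ := h₂
  refine h ((i : ℤ) - j) (mem_Icc.2 (by omega)) ?_
  convert (ZMod.intCast_eq_intCast_iff_dvd_sub _ _ _).1 hij using 1
  ring

/-- The bound for the correlation of the sieve weights of two progressions `progression q R n₁` and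
`progression q R n₂` with `n₁ - n₂ = m`: only the primes modulo which the two progressions can meet
contribute. -/
noncomputable def collisionFactor (w z : ℝ) (q R : ℕ) (m : ℤ) : ℝ :=
  ∏ p ∈ primesBetween w z,
    if ∃ l ∈ Icc (-(R : ℤ)) R, (p : ℤ) ∣ m - q * l then ((1 - 1 / (p : ℝ)) ^ R)⁻¹ else 1

lemma truncSingularSeries_union_le_collisionFactor (hR : (R : ℝ) ≤ w) (hq : q.Prime)
    (hzq : z < q) {n₁ n₂ : ℤ} {A₁ A₂ : Finset ℤ} (h₁ : A₁ ⊆ progression q R n₁)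
    (h₂ : A₂ ⊆ progression q R n₂) :
    truncSingularSeries w z (#A₁ + #A₂) (A₁ ∪ A₂) ≤ collisionFactor w z q R (n₁ - n₂) := by
  refine prod_le_prod (fun p hp => ?_) fun p hp => ?_ <;>
    obtain ⟨hpp, hwp, hpz⟩ := mem_primesBetween.1 hp
  · have := one_sub_inv_pos hpp
    exact mul_nonneg (one_sub_residueCount_div_nonneg hpp _) (by positivity)
  have hpq : p.Coprime q := (Nat.coprime_primes hpp hq).2 fun h =>
    (hpz.trans_lt hzq).ne (congrArg _ h)
  have hRp : R ≤ p := by exact_mod_cast hR.trans hwp.le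
  have hν₁ : residueCount p A₁ = #A₁ :=
    residueCount_eq_card ((injOn_intCast_progression hpq hRp n₁).mono (coe_subset.2 h₁))
  have hν₂ : residueCount p A₂ = #A₂ :=
    residueCount_eq_card ((injOn_intCast_progression hpq hRp n₂).mono (coe_subset.2 h₂))
  split_ifs with hc
  · have hν : #A₁ ≤ residueCount p (A₁ ∪ A₂) := hν₁ ▸ residueCount_mono subset_union_left
    have hA₂ : #A₂ ≤ R := (card_le_card h₂).trans (card_progression_le q R n₂)
    exact one_sub_div_mul_inv_le hpp (by omega)
  · push Not at hc
    have hdisj := (disjoint_image_progression hc).mono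
      (image_subset_image h₁) (image_subset_image h₂)
    have hν : residueCount p (A₁ ∪ A₂) = #A₁ + #A₂ := by
      rw [residueCount_union_of_disjoint hdisj, hν₁, hν₂]
    have := one_sub_div_mul_inv_le hpp (v := residueCount p (A₁ ∪ A₂)) (k := #A₁ + #A₂) (e := 0)
      hν.ge
    rwa [pow_zero, inv_one] at this

lemma expect_sieveWeight_mul_progression_le (hwz : w ≤ z) (hR : (R : ℝ) ≤ w) (hq : q.Prime)
    (hzq : z < q) (c n₁ n₂ : ℤ) :
    𝔼 b ∈ range (PP z), sieveWeight w z (c - (b : ℤ)) (progression q R n₁) *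
        sieveWeight w z (c - (b : ℤ)) (progression q R n₂)
      ≤ collisionFactor w z q R (n₁ - n₂) := by
  rw [expect_sieveWeight_mul hwz]
  exact expect_le (nonempty_range_iff.2 (PP_ne_zero w)) fun a _ =>
    truncSingularSeries_union_le_collisionFactor hR hq hzq (filter_subset _ _) (filter_subset _ _)

/-- The multiplicative function of `v` giving weight `(1 - 1 / p) ^ (-s)` to each prime `p ∈ (w, z]`
dividing `v`. -/
noncomputable def divisorWeight (w z : ℝ) (s : ℕ) (v : ℤ) : ℝ :=
  ∏ p ∈ primesBetween w z, if (p : ℤ) ∣ v then ((1 - 1 / (p : ℝ)) ^ s)⁻¹ else 1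

lemma one_le_inv_one_sub_inv_pow (hp : p.Prime) (s : ℕ) : 1 ≤ ((1 - 1 / (p : ℝ)) ^ s)⁻¹ :=
  (one_le_inv₀ (pow_pos (one_sub_inv_pos hp) s)).2 <|
    pow_le_one₀ (one_sub_inv_pos hp).le (sub_le_self _ (by positivity))

lemma collisionFactor_le_inv_sigBetween_pow (w z : ℝ) (q R : ℕ) (m : ℤ) :
    collisionFactor w z q R m ≤ (sigBetween w z ^ R)⁻¹ := by
  rw [sigBetween, ← prod_pow, ← prod_inv_distrib]
  refine prod_le_prod (fun p hp => ?_) fun p hp => ?_ <;>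
  · have := one_le_inv_one_sub_inv_pow (mem_primesBetween.1 hp).1 R
    split_ifs <;> linarith

lemma divisorWeight_nonneg (w z : ℝ) (s : ℕ) (v : ℤ) : 0 ≤ divisorWeight w z s v :=
  prod_nonneg fun p hp => by
    have := one_sub_inv_pos (mem_primesBetween.1 hp).1
    split_ifs <;> positivity

lemma divisorWeight_pow (w z : ℝ) (s k : ℕ) (v : ℤ) :
    divisorWeight w z s v ^ k = divisorWeight w z (s * k) v := by
  simp only [divisorWeight, ← prod_pow, ite_pow, one_pow, inv_pow, ← pow_mul]

lemma collisionFactor_le_prod_divisorWeight (w z : ℝ) (q R : ℕ) (m : ℤ) :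
    collisionFactor w z q R m ≤ ∏ l ∈ Icc (-(R : ℤ)) R, divisorWeight w z R (m - q * l) := by
  simp only [divisorWeight]
  rw [prod_comm]
  refine prod_le_prod (fun p hp => ?_) fun p hp => ?_ <;>
    have hone := one_le_inv_one_sub_inv_pow (mem_primesBetween.1 hp).1 R
  · split_ifs <;> linarith
  · rw [prod_ite, prod_const_one, mul_one, prod_const]
    split_ifs with hc
    · obtain ⟨l, hl, hdvd⟩ := hc
      exact le_self_pow₀ hone (card_ne_zero_of_mem (mem_filter.2 ⟨hl, hdvd⟩))
    · exact one_le_pow₀ hone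

lemma prod_le_expect_pow_card {ι : Type*} {s : Finset ι} (hs : s.Nonempty) {f : ι → ℝ}
    (hf : ∀ i ∈ s, 0 ≤ f i) : ∏ i ∈ s, f i ≤ 𝔼 i ∈ s, f i ^ #s := by
  have hs₀ : #s ≠ 0 := hs.card_ne_zero
  calc ∏ i ∈ s, f i = ∏ i ∈ s, (f i ^ #s) ^ ((#s : ℝ)⁻¹) :=
        prod_congr rfl fun i hi => (Real.pow_rpow_inv_natCast (hf i hi) hs₀).symm
    _ ≤ ∑ i ∈ s, (#s : ℝ)⁻¹ * f i ^ #s :=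
        Real.geom_mean_le_arith_mean_weighted s _ _ (fun _ _ => by positivity)
          (by simp [hs₀]) fun i hi => pow_nonneg (hf i hi) _
    _ = 𝔼 i ∈ s, f i ^ #s := by rw [← mul_sum, expect_eq_sum_div_card, inv_mul_eq_div]

lemma card_Icc_neg_self (R : ℕ) : #(Icc (-(R : ℤ)) R) = 2 * R + 1 := by
  rw [Int.card_Icc]
  omega

lemma collisionFactor_le_expect_divisorWeight (w z : ℝ) (q R : ℕ) (m : ℤ) :
    collisionFactor w z q R m
      ≤ 𝔼 l ∈ Icc (-(R : ℤ)) R, divisorWeight w z (R * (2 * R + 1)) (m - q * l) := by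
  have hne : (Icc (-(R : ℤ)) R).Nonempty := nonempty_Icc.2 (by omega)
  refine (collisionFactor_le_prod_divisorWeight w z q R m).trans ?_
  simpa only [card_Icc_neg_self, divisorWeight_pow] using
    prod_le_expect_pow_card hne fun l _ => divisorWeight_nonneg w z R (m - q * l)

end Collisions

section DivisorSums

open Finset
open scoped BigOperators

variable {w z : ℝ}

lemma card_filter_dvd_le {I : Finset ℤ} {B d : ℕ} (hI : ∀ v ∈ I, v ≠ 0 ∧ |v| ≤ B) :
    (#{v ∈ I | (d : ℤ) ∣ v} : ℝ) ≤ 2 * B / d := by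
  set S := (Ioc 0 B).filter (d ∣ ·)
  have hsub : {v ∈ I | (d : ℤ) ∣ v}
      ⊆ (S.image fun k : ℕ => (k : ℤ)) ∪ S.image fun k : ℕ => -(k : ℤ) := by
    intro v hv
    obtain ⟨hvI, hdv⟩ := mem_filter.1 hv
    obtain ⟨hv₀, hvB⟩ := hI v hvI
    rw [Int.abs_eq_natAbs] at hvB
    have hmem : v.natAbs ∈ S :=
      mem_filter.2 ⟨mem_Ioc.2 (by omega), Int.natCast_dvd.1 hdv⟩
    rw [mem_union, mem_image, mem_image]
    rcases Int.natAbs_eq v with h | h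
    · exact Or.inl ⟨_, hmem, h.symm⟩
    · exact Or.inr ⟨_, hmem, h.symm⟩
  have hcard : #{v ∈ I | (d : ℤ) ∣ v} ≤ 2 * (B / d) :=
    calc _ ≤ #S + #S := (card_le_card hsub).trans <|
          (card_union_le _ _).trans (add_le_add card_image_le card_image_le)
      _ = 2 * (B / d) := by rw [Nat.Ioc_filter_dvd_card_eq_div, two_mul]
  calc (#{v ∈ I | (d : ℤ) ∣ v} : ℝ) ≤ 2 * ((B / d : ℕ) : ℝ) := by exact_mod_cast hcard
    _ ≤ 2 * ((B : ℝ) / d) := by gcongr; exact Nat.cast_div_le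
    _ = 2 * B / d := by ring

lemma prod_ite_dvd_eq_sum {T : Finset ℕ} (hT : ∀ p ∈ T, p.Prime) (g : ℕ → ℝ) (v : ℤ) :
    ∏ p ∈ T, (if (p : ℤ) ∣ v then 1 + g p else 1)
      = ∑ S ∈ T.powerset, if ((∏ p ∈ S, p : ℕ) : ℤ) ∣ v then ∏ p ∈ S, g p else 0 := by
  have hsplit (p : ℕ) : (if (p : ℤ) ∣ v then 1 + g p else 1)
      = 1 + if (p : ℤ) ∣ v then g p else 0 := by
    split_ifs <;> simp
  simp only [hsplit, prod_one_add, prod_ite_zero]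
  refine sum_congr rfl fun S hS => if_congr ?_ rfl rfl
  simp only [Int.natCast_dvd]
  exact ⟨prod_primes_dvd _ fun p hp => (hT p (mem_powerset.1 hS hp)).prime,
    fun h p hp => (dvd_prod_of_mem _ hp).trans h⟩

lemma sum_prod_ite_dvd_le {T : Finset ℕ} (hT : ∀ p ∈ T, p.Prime) {g : ℕ → ℝ}
    (hg : ∀ p ∈ T, 0 ≤ g p) {I : Finset ℤ} {B : ℕ} (hI : ∀ v ∈ I, v ≠ 0 ∧ |v| ≤ B) :
    ∑ v ∈ I, ∏ p ∈ T, (if (p : ℤ) ∣ v then 1 + g p else 1)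
      ≤ #I + 2 * B * (∏ p ∈ T, (1 + g p / p) - 1) := by
  have hterm : ∀ S ∈ T.powerset.erase ∅,
      ∑ v ∈ I, (if ((∏ p ∈ S, p : ℕ) : ℤ) ∣ v then ∏ p ∈ S, g p else 0)
        ≤ 2 * B * ∏ p ∈ S, g p / p := fun S hS => by
    have hg₀ : 0 ≤ ∏ p ∈ S, g p :=
      prod_nonneg fun p hp => hg p (mem_powerset.1 (mem_of_mem_erase hS) hp)
    rw [← sum_filter, sum_const, nsmul_eq_mul, prod_div_distrib, mul_div_assoc',
      ← div_mul_eq_mul_div, ← Nat.cast_prod]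
    exact mul_le_mul_of_nonneg_right (card_filter_dvd_le hI) hg₀
  calc ∑ v ∈ I, ∏ p ∈ T, (if (p : ℤ) ∣ v then 1 + g p else 1)
      = ∑ S ∈ T.powerset, ∑ v ∈ I,
          if ((∏ p ∈ S, p : ℕ) : ℤ) ∣ v then ∏ p ∈ S, g p else 0 := by
        simp only [prod_ite_dvd_eq_sum hT]
        exact sum_comm
    _ = #I + ∑ S ∈ T.powerset.erase ∅, ∑ v ∈ I,
          if ((∏ p ∈ S, p : ℕ) : ℤ) ∣ v then ∏ p ∈ S, g p else 0 := by
        rw [← add_sum_erase _ _ (empty_mem_powerset T)]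
        simp
    _ ≤ #I + ∑ S ∈ T.powerset.erase ∅, 2 * B * ∏ p ∈ S, g p / p :=
        add_le_add le_rfl (sum_le_sum hterm)
    _ = #I + 2 * B * (∏ p ∈ T, (1 + g p / p) - 1) := by
        rw [← mul_sum, prod_one_add, ← add_sum_erase _ _ (empty_mem_powerset T)]
        simp

lemma exp_sub_one_le_mul_exp (t : ℝ) : Real.exp t - 1 ≤ t * Real.exp t := by
  have h := mul_le_mul_of_nonneg_right (Real.one_sub_le_exp_neg t) (Real.exp_pos t).le
  rw [← Real.exp_add, neg_add_cancel, Real.exp_zero] at h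
  linarith

lemma inv_one_sub_inv_le_exp {p : ℕ} (hp : p.Prime) :
    (1 - 1 / (p : ℝ))⁻¹ ≤ Real.exp (2 / p) := by
  have hpos := one_sub_inv_pos hp
  have hhalf : 1 / (p : ℝ) ≤ 1 / 2 :=
    one_div_le_one_div_of_le (by norm_num) (by exact_mod_cast hp.two_le)
  have h₀ : (0 : ℝ) ≤ 1 / p := by positivity
  calc (1 - 1 / (p : ℝ))⁻¹ ≤ 2 * (1 / p) + 1 := by
        rw [inv_le_iff_one_le_mul₀ hpos]
        nlinarith
    _ ≤ Real.exp (2 * (1 / p)) := Real.add_one_le_exp _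
    _ = Real.exp (2 / p) := by rw [mul_one_div]

lemma inv_one_sub_inv_pow_sub_one_le (hw : 0 < w) {p : ℕ} (hp : p ∈ primesBetween w z) (s : ℕ) :
    ((1 - 1 / (p : ℝ)) ^ s)⁻¹ - 1 ≤ 2 * s * Real.exp (2 * s / w) / p := by
  obtain ⟨hpp, hwp, -⟩ := mem_primesBetween.1 hp
  have hpos := one_sub_inv_pos hpp
  calc ((1 - 1 / (p : ℝ)) ^ s)⁻¹ - 1 ≤ Real.exp (2 / p) ^ s - 1 := by
        rw [← inv_pow]
        gcongr
        exact inv_one_sub_inv_le_exp hpp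
    _ = Real.exp (2 * s / p) - 1 := by rw [← Real.exp_nat_mul]; ring_nf
    _ ≤ 2 * s / p * Real.exp (2 * s / p) := exp_sub_one_le_mul_exp _
    _ ≤ 2 * s / p * Real.exp (2 * s / w) := by gcongr
    _ = 2 * s * Real.exp (2 * s / w) / p := by ring

lemma prod_one_add_div_le_exp (hw : 0 < w) (s : ℕ) :
    ∏ p ∈ primesBetween w z, (1 + (((1 - 1 / (p : ℝ)) ^ s)⁻¹ - 1) / p)
      ≤ Real.exp (2 * (2 * s / w) * Real.exp (2 * s / w)) := by
  have hfactor : ∀ p ∈ primesBetween w z, 1 + (((1 - 1 / (p : ℝ)) ^ s)⁻¹ - 1) / p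
      ≤ Real.exp (2 * s * Real.exp (2 * s / w) * ((p : ℝ) ^ 2)⁻¹) := fun p hp =>
    calc 1 + (((1 - 1 / (p : ℝ)) ^ s)⁻¹ - 1) / p
        ≤ 2 * s * Real.exp (2 * s / w) / p / p + 1 := by
          rw [add_comm]
          gcongr
          exact inv_one_sub_inv_pow_sub_one_le hw hp s
      _ = 2 * s * Real.exp (2 * s / w) * ((p : ℝ) ^ 2)⁻¹ + 1 := by ring
      _ ≤ _ := Real.add_one_le_exp _
  have hnonneg : ∀ p ∈ primesBetween w z, 0 ≤ 1 + (((1 - 1 / (p : ℝ)) ^ s)⁻¹ - 1) / p :=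
    fun p hp => add_nonneg zero_le_one <| div_nonneg
      (sub_nonneg.2 (one_le_inv_one_sub_inv_pow (mem_primesBetween.1 hp).1 s)) p.cast_nonneg
  refine (prod_le_prod hnonneg hfactor).trans ?_
  rw [← Real.exp_sum, ← mul_sum, Real.exp_le_exp]
  calc 2 * s * Real.exp (2 * s / w) * ∑ p ∈ primesBetween w z, ((p : ℝ) ^ 2)⁻¹
      ≤ 2 * s * Real.exp (2 * s / w) * (2 / w) := by
        gcongr
        exact sum_primesBetween_inv_sq_le hw
    _ = _ := by ring

lemma sum_divisorWeight_le (hw : 0 < w) {I : Finset ℤ} {B : ℕ} (hI : ∀ v ∈ I, v ≠ 0 ∧ |v| ≤ B)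
    (s : ℕ) : ∑ v ∈ I, divisorWeight w z s v
      ≤ #I + 2 * B * (Real.exp (2 * (2 * s / w) * Real.exp (2 * s / w)) - 1) := by
  have hsum := sum_prod_ite_dvd_le (T := primesBetween w z)
    (g := fun p => ((1 - 1 / (p : ℝ)) ^ s)⁻¹ - 1) (fun p hp => (mem_primesBetween.1 hp).1)
    (fun p hp => sub_nonneg.2 (one_le_inv_one_sub_inv_pow (mem_primesBetween.1 hp).1 s)) hI
  simp only [add_sub_cancel] at hsum
  refine hsum.trans ?_
  gcongr
  exact prod_one_add_div_le_exp hw s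

lemma sum_collisionFactor_le_of_ne (hw : 0 < w) {q R B : ℕ} {I : Finset ℤ}
    (hI : ∀ m ∈ I, ∀ l ∈ Icc (-(R : ℤ)) R, m - q * l ≠ 0 ∧ |m - q * l| ≤ B) {s : ℕ}
    (hs : s = R * (2 * R + 1)) :
    ∑ m ∈ I, collisionFactor w z q R m
      ≤ #I + 2 * B * (Real.exp (2 * (2 * s / w) * Real.exp (2 * s / w)) - 1) := by
  have hne : (Icc (-(R : ℤ)) R).Nonempty := nonempty_Icc.2 (by omega)
  calc ∑ m ∈ I, collisionFactor w z q R m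
      ≤ ∑ m ∈ I, 𝔼 l ∈ Icc (-(R : ℤ)) R, divisorWeight w z s (m - q * l) :=
        hs ▸ sum_le_sum fun m _ => collisionFactor_le_expect_divisorWeight w z q R m
    _ = 𝔼 l ∈ Icc (-(R : ℤ)) R, ∑ m ∈ I, divisorWeight w z s (m - q * l) :=
        (expect_sum_comm _ _ _).symm
    _ ≤ _ := expect_le hne fun l hl => ?_
  rw [← card_image_of_injective I (sub_left_injective (b := (q : ℤ) * l)),
    ← sum_image (f := divisorWeight w z s) (sub_left_injective (b := (q : ℤ) * l)).injOn]
  exact sum_divisorWeight_le hw (forall_mem_image.2 fun m hm => hI m hm l hl) s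

lemma sum_collisionFactor_le (hw : 0 < w) {q R B : ℕ} {I : Finset ℤ}
    (hI : ∀ m ∈ I, ∀ l ∈ Icc (-(R : ℤ)) R, |m - q * l| ≤ B) {s : ℕ}
    (hs : s = R * (2 * R + 1)) :
    ∑ m ∈ I, collisionFactor w z q R m
      ≤ #I + 2 * B * (Real.exp (2 * (2 * s / w) * Real.exp (2 * s / w)) - 1)
        + (2 * R + 1) * (sigBetween w z ^ R)⁻¹ := by
  set J := (Icc (-(R : ℤ)) R).image fun l => (q : ℤ) * l
  have hσ : 0 ≤ (sigBetween w z ^ R)⁻¹ := by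
    have := sigBetween_pos w z
    positivity
  have hJcard : (#{m ∈ I | m ∈ J} : ℝ) ≤ 2 * R + 1 := by
    have : #{m ∈ I | m ∈ J} ≤ 2 * R + 1 :=
      (card_le_card fun m hm => (mem_filter.1 hm).2).trans
        (card_image_le.trans (card_Icc_neg_self R).le)
    exact_mod_cast this
  have hdiag : ∑ m ∈ I with m ∈ J, collisionFactor w z q R m
      ≤ (2 * R + 1) * (sigBetween w z ^ R)⁻¹ := by
    refine (sum_le_card_nsmul _ _ _ fun m _ =>
      collisionFactor_le_inv_sigBetween_pow w z q R m).trans ?_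
    rw [nsmul_eq_mul]
    gcongr
  have hoff : ∑ m ∈ I with m ∉ J, collisionFactor w z q R m
      ≤ #I + 2 * B * (Real.exp (2 * (2 * s / w) * Real.exp (2 * s / w)) - 1) := by
    have hoffI : ∀ m ∈ {m ∈ I | m ∉ J}, ∀ l ∈ Icc (-(R : ℤ)) R,
        m - q * l ≠ 0 ∧ |m - q * l| ≤ B := fun m hm l hl =>
      ⟨fun h => (mem_filter.1 hm).2 (mem_image.2 ⟨l, hl, (sub_eq_zero.1 h).symm⟩),
        hI m (mem_filter.1 hm).1 l hl⟩
    refine (sum_collisionFactor_le_of_ne hw hoffI hs).trans ?_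
    gcongr
    exact filter_subset _ _
  rw [← sum_filter_add_sum_filter_not I (· ∈ J)]
  linarith

end DivisorSums

section Mertens

open Finset
open scoped BigOperators

lemma card_primes_dyadic_le (k : ℕ) :
    (k + 1) * #{p ∈ Ioc (2 ^ (k + 1)) (2 ^ (k + 2)) | p.Prime} ≤ 2 ^ (k + 3) := by
  set s := {p ∈ Ioc (2 ^ (k + 1)) (2 ^ (k + 2)) | p.Prime}
  have hlower : (2 ^ (k + 1)) ^ #s ≤ ∏ p ∈ s, p :=
    pow_card_le_prod s id _ fun p hp => (mem_Ioc.1 (mem_filter.1 hp).1).1.le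
  have hupper : ∏ p ∈ s, p ≤ primorial (2 ^ (k + 2)) := by
    refine prod_le_prod_of_subset_of_one_le' (fun p hp => ?_) fun p hp _ =>
      (mem_filter.1 hp).2.one_lt.le
    obtain ⟨hpI, hpp⟩ := mem_filter.1 hp
    exact mem_filter.2 ⟨mem_range.2 (Nat.lt_succ_of_le (mem_Ioc.1 hpI).2), hpp⟩
  have hpow : 2 ^ ((k + 1) * #s) ≤ 2 ^ (2 * 2 ^ (k + 2)) := by
    rw [pow_mul, pow_mul]
    exact (hlower.trans hupper).trans (primorial_le_four_pow _)
  calc (k + 1) * #s ≤ 2 * 2 ^ (k + 2) := (Nat.pow_le_pow_iff_right one_lt_two).1 hpow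
    _ = 2 ^ (k + 3) := by ring

lemma sum_inv_primes_dyadic_le (k : ℕ) :
    ∑ p ∈ Ioc (2 ^ (k + 1)) (2 ^ (k + 2)) with Nat.Prime p, 1 / (p : ℝ) ≤ 4 / (k + 1) := by
  set s := {p ∈ Ioc (2 ^ (k + 1)) (2 ^ (k + 2)) | p.Prime}
  have hcard : ((k : ℝ) + 1) * #s ≤ 2 ^ (k + 3) := by exact_mod_cast card_primes_dyadic_le k
  calc ∑ p ∈ s, 1 / (p : ℝ) ≤ #s • (1 / (2 : ℝ) ^ (k + 1)) :=
        sum_le_card_nsmul _ _ _ fun p hp => by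
          have : (2 : ℝ) ^ (k + 1) ≤ p := by
            exact_mod_cast (mem_Ioc.1 (mem_filter.1 hp).1).1.le
          gcongr
    _ ≤ 4 / (k + 1) := by
        rw [nsmul_eq_mul, mul_one_div, div_le_div_iff₀ (by positivity) (by positivity)]
        calc (#s : ℝ) * (k + 1) ≤ 2 ^ (k + 3) := by rwa [mul_comm]
          _ = 4 * 2 ^ (k + 1) := by ring

lemma sum_inv_primes_le_harmonic (k : ℕ) :
    ∑ p ∈ Ioc 0 (2 ^ (k + 1)) with Nat.Prime p, 1 / (p : ℝ) ≤ 1 / 2 + 4 * (harmonic k : ℝ) := by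
  induction k with
  | zero =>
    have h2 : {p ∈ Ioc 0 2 | p.Prime} = {2} := by decide
    simp [h2]
  | succ k ih =>
    have hsplit : ∑ p ∈ Ioc 0 (2 ^ (k + 2)) with Nat.Prime p, 1 / (p : ℝ)
        = ∑ p ∈ Ioc 0 (2 ^ (k + 1)) with Nat.Prime p, 1 / (p : ℝ)
          + ∑ p ∈ Ioc (2 ^ (k + 1)) (2 ^ (k + 2)) with Nat.Prime p, 1 / (p : ℝ) := by
      simp only [sum_filter]
      exact (sum_Ioc_consecutive _ (Nat.zero_le _)
        (Nat.pow_le_pow_right two_pos (Nat.le_succ _))).symm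
    have hdyadic := sum_inv_primes_dyadic_le k
    rw [hsplit, harmonic_succ]
    push_cast
    rw [div_eq_mul_inv] at hdyadic
    linarith

lemma inv_sigBetween_le {w z : ℝ} {k : ℕ} (hz : z ≤ 2 ^ (k + 1)) :
    (sigBetween w z)⁻¹ ≤ Real.exp (9 + 8 * Real.log k) := by
  have hsub : primesBetween w z ⊆ {p ∈ Ioc 0 (2 ^ (k + 1)) | p.Prime} := fun p hp => by
    obtain ⟨hpp, -, hpz⟩ := mem_primesBetween.1 hp
    exact mem_filter.2 ⟨mem_Ioc.2 ⟨hpp.pos, by exact_mod_cast hpz.trans hz⟩, hpp⟩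
  have hsum : ∑ p ∈ primesBetween w z, 1 / (p : ℝ) ≤ 1 / 2 + 4 * (1 + Real.log k) :=
    calc _ ≤ ∑ p ∈ Ioc 0 (2 ^ (k + 1)) with Nat.Prime p, 1 / (p : ℝ) :=
          sum_le_sum_of_subset_of_nonneg hsub fun _ _ _ => by positivity
      _ ≤ 1 / 2 + 4 * (harmonic k : ℝ) := sum_inv_primes_le_harmonic k
      _ ≤ 1 / 2 + 4 * (1 + Real.log k) := by
          gcongr
          exact harmonic_le_one_add_log k
  calc (sigBetween w z)⁻¹ = ∏ p ∈ primesBetween w z, (1 - 1 / (p : ℝ))⁻¹ := by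
        rw [sigBetween, prod_inv_distrib]
    _ ≤ ∏ p ∈ primesBetween w z, Real.exp (2 / p) :=
        prod_le_prod (fun p hp => (inv_pos.2 (one_sub_inv_pos (mem_primesBetween.1 hp).1)).le)
          fun p hp => inv_one_sub_inv_le_exp (mem_primesBetween.1 hp).1
    _ = Real.exp (2 * ∑ p ∈ primesBetween w z, 1 / (p : ℝ)) := by
        simp only [← Real.exp_sum, mul_sum, mul_one_div]
    _ ≤ Real.exp (9 + 8 * Real.log k) := Real.exp_le_exp.2 (by linarith)

end Mertens

section Moments

open Finset
open scoped BigOperators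

variable {w z : ℝ} {q R L : ℕ}

lemma le_expect_sum_sieveWeight (hw : 0 < w) (hwz : w ≤ z) (hR : (R : ℝ) ≤ w) (c : ℤ)
    (I : Finset ℤ) :
    #I * (1 - 2 * R ^ 2 / w)
      ≤ 𝔼 b ∈ range (PP z), ∑ n ∈ I, sieveWeight w z (c - (b : ℤ)) (progression q R n) := by
  rw [expect_sum_comm, ← nsmul_eq_mul]
  exact card_nsmul_le_sum _ _ _ fun n _ =>
    one_sub_le_expect_sieveWeight hw hwz c (card_progression_le q R n) hR

lemma sum_Ico_collisionFactor_sub_le (hw : 0 < w) (hqR : q * R ≤ L) {a n : ℤ}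
    (hn : n ∈ Ico a (a + L)) {s : ℕ} (hs : s = R * (2 * R + 1)) :
    ∑ m ∈ Ico a (a + L), collisionFactor w z q R (m - n)
      ≤ L + 4 * L * (Real.exp (2 * (2 * s / w) * Real.exp (2 * s / w)) - 1)
        + (2 * R + 1) * (sigBetween w z ^ R)⁻¹ := by
  have hinj : Function.Injective fun m : ℤ => m - n := sub_left_injective
  have hcard : #((Ico a (a + L)).image (· - n)) = L := by
    rw [card_image_of_injective _ hinj, Int.card_Ico]
    omega
  have hbound : ∀ m ∈ (Ico a (a + L)).image (· - n), ∀ l ∈ Icc (-(R : ℤ)) R,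
      |m - q * l| ≤ ((2 * L : ℕ) : ℤ) := by
    refine forall_mem_image.2 fun m hm l hl => ?_
    rw [mem_Ico] at hm hn
    have hmn : |m - n| ≤ L := abs_le.2 (by omega)
    have hql : |(q : ℤ) * l| ≤ L := by
      rw [abs_mul, Nat.abs_cast]
      calc (q : ℤ) * |l| ≤ q * R := by gcongr; exact abs_le.2 (mem_Icc.1 hl)
        _ ≤ L := by exact_mod_cast hqR
    have := abs_sub (m - n) (q * l)
    push_cast
    linarith
  have h := sum_collisionFactor_le (z := z) hw hbound hs
  rw [sum_image hinj.injOn, hcard] at h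
  refine h.trans_eq ?_
  push_cast
  ring

lemma expect_sum_sieveWeight_sq_le (hw : 0 < w) (hwz : w ≤ z) (hR : (R : ℝ) ≤ w) (hq : q.Prime)
    (hzq : z < q) (hqR : q * R ≤ L) (c a : ℤ) {s : ℕ} (hs : s = R * (2 * R + 1)) :
    𝔼 b ∈ range (PP z),
        (∑ n ∈ Ico a (a + L), sieveWeight w z (c - (b : ℤ)) (progression q R n)) ^ 2
      ≤ L * (L + 4 * L * (Real.exp (2 * (2 * s / w) * Real.exp (2 * s / w)) - 1)
        + (2 * R + 1) * (sigBetween w z ^ R)⁻¹) := by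
  have hcard : #(Ico a (a + L)) = L := by simp
  calc 𝔼 b ∈ range (PP z),
        (∑ n ∈ Ico a (a + L), sieveWeight w z (c - (b : ℤ)) (progression q R n)) ^ 2
      = ∑ n ∈ Ico a (a + L), ∑ m ∈ Ico a (a + L), 𝔼 b ∈ range (PP z),
          sieveWeight w z (c - (b : ℤ)) (progression q R m) *
            sieveWeight w z (c - (b : ℤ)) (progression q R n) := by
        simp only [sq, sum_mul_sum, expect_sum_comm]
        exact sum_comm
    _ ≤ ∑ n ∈ Ico a (a + L), ∑ m ∈ Ico a (a + L), collisionFactor w z q R (m - n) :=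
        sum_le_sum fun n _ => sum_le_sum fun m _ =>
          expect_sieveWeight_mul_progression_le hwz hR hq hzq c m n
    _ ≤ #(Ico a (a + L)) • (L + 4 * L * (Real.exp (2 * (2 * s / w) * Real.exp (2 * s / w)) - 1)
          + (2 * R + 1) * (sigBetween w z ^ R)⁻¹) :=
        sum_le_card_nsmul _ _ _ fun n hn => sum_Ico_collisionFactor_sub_le hw hqR hn hs
    _ = _ := by rw [hcard, nsmul_eq_mul]

lemma sq_expect_le_expect_sq {ι : Type*} (s : Finset ι) (f : ι → ℝ) :
    (𝔼 i ∈ s, f i) ^ 2 ≤ 𝔼 i ∈ s, f i ^ 2 := by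
  rcases s.eq_empty_or_nonempty with rfl | hs
  · simp
  · simpa [hs] using expect_mul_sq_le_sq_mul_sq s f 1

/-- The second moment gives the upper bound for the first one, and the first moment gives the lower
bound for the second one. -/
lemma abs_sub_moments_le {a₁ a₂ L α β : ℝ} (hL : 0 ≤ L) (hα : 0 ≤ α) (hβ : 0 ≤ β)
    (hlow : L * (1 - α) ≤ a₁) (hup : a₂ ≤ L ^ 2 * (1 + β)) (hsq : a₁ ^ 2 ≤ a₂) :
    |a₁ - L| ≤ (2 * α + β) * L ∧ |a₂ - L ^ 2| ≤ (2 * α + β) * L ^ 2 := by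
  have hLα := mul_nonneg hL hα
  have hLβ := mul_nonneg hL hβ
  have hL2α := mul_nonneg (sq_nonneg L) hα
  have hL2β := mul_nonneg (sq_nonneg L) hβ
  have hup₁ : a₁ ≤ L * (1 + β) := by
    refine le_of_sq_le_sq ?_ (by positivity)
    nlinarith [mul_nonneg (sq_nonneg L) (mul_nonneg hβ hβ)]
  have hlow₂ : L ^ 2 * (1 - 2 * α) ≤ a₂ := by
    rcases le_or_gt α 1 with h | h
    · have : (L * (1 - α)) ^ 2 ≤ a₁ ^ 2 :=
        pow_le_pow_left₀ (mul_nonneg hL (by linarith)) hlow 2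
      nlinarith [mul_nonneg (sq_nonneg L) (sq_nonneg α)]
    · nlinarith [sq_nonneg L, sq_nonneg a₁]
  constructor <;> rw [abs_le] <;> constructor <;> nlinarith

lemma exp_mul_exp_sub_one_le {τ β ε : ℝ} (hβ : 0 ≤ β) (hε : 0 ≤ ε) (hε₁ : ε ≤ 1)
    (hτ : τ ≤ β * ε) :
    Real.exp (2 * τ * Real.exp τ) - 1
      ≤ 2 * β * Real.exp β * Real.exp (2 * β * Real.exp β) * ε := by
  have hτβ : τ ≤ β := hτ.trans (mul_le_of_le_one_right hβ hε₁)
  have harg : 2 * τ * Real.exp τ ≤ 2 * β * Real.exp β * ε :=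
    calc 2 * τ * Real.exp τ ≤ 2 * (β * ε) * Real.exp β := by gcongr
      _ = 2 * β * Real.exp β * ε := by ring
  have harg₁ : 2 * β * Real.exp β * ε ≤ 2 * β * Real.exp β :=
    mul_le_of_le_one_right (by positivity) hε₁
  calc Real.exp (2 * τ * Real.exp τ) - 1 ≤ Real.exp (2 * β * Real.exp β * ε) - 1 := by gcongr
    _ ≤ 2 * β * Real.exp β * ε * Real.exp (2 * β * Real.exp β * ε) := exp_sub_one_le_mul_exp _
    _ ≤ 2 * β * Real.exp β * ε * Real.exp (2 * β * Real.exp β) := by gcongr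
    _ = _ := by ring

/-- The implied constant for the moments of the sieve weights when `R ^ 2 ≤ κ * ε * w`, where `ε` is
the relative error: `2 * κ * ε` is lost in the first moment, and `6 * κ * ε` bounds the exponents
`2 * R * (2 * R + 1) / w` of the divisor sums in the second one. -/
noncomputable def momentConst (κ : ℝ) : ℝ :=
  4 * κ + 4 * (2 * (6 * κ) * Real.exp (6 * κ) * Real.exp (2 * (6 * κ) * Real.exp (6 * κ))) + 1

lemma momentConst_pos {κ : ℝ} (hκ : 0 ≤ κ) : 0 < momentConst κ := by
  rw [momentConst]
  positivity

lemma abs_expect_sum_sieveWeight_pow_sub_le {κ ε : ℝ} (hκ : 0 ≤ κ) (hε : 0 ≤ ε) (hε₁ : ε ≤ 1)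
    (hw : 0 < w) (hwz : w ≤ z) (hR : (R : ℝ) ≤ w) (hRκ : (R : ℝ) ^ 2 ≤ κ * ε * w) (hq : q.Prime)
    (hzq : z < q) (hqR : q * R ≤ L) (hdiag : (2 * R + 1) * (sigBetween w z ^ R)⁻¹ ≤ ε * L)
    (c a : ℤ) {j : ℕ} (hj : j ∈ ({1, 2} : Set ℕ)) :
    |𝔼 b ∈ range (PP z),
        (∑ n ∈ Ico a (a + L), sieveWeight w z (c - (b : ℤ)) (progression q R n)) ^ j - (L : ℝ) ^ j|
      ≤ momentConst κ * ε * (L : ℝ) ^ j := by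
  set X : ℕ → ℝ := fun b => ∑ n ∈ Ico a (a + L), sieveWeight w z (c - (b : ℤ)) (progression q R n)
  set φ : ℝ := 2 * (6 * κ) * Real.exp (6 * κ) * Real.exp (2 * (6 * κ) * Real.exp (6 * κ))
  have hfirst : L * (1 - 2 * κ * ε) ≤ 𝔼 b ∈ range (PP z), X b := by
    have hcard : #(Ico a (a + L)) = L := by simp
    have hloss : 2 * (R : ℝ) ^ 2 / w ≤ 2 * κ * ε := by
      rw [div_le_iff₀ hw]
      linarith
    refine le_trans ?_ (hcard ▸ le_expect_sum_sieveWeight hw hwz hR c (Ico a (a + L)))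
    gcongr
  have hsecond : 𝔼 b ∈ range (PP z), X b ^ 2 ≤ (L : ℝ) ^ 2 * (1 + (4 * φ + 1) * ε) := by
    have hτ : 2 * ((R * (2 * R + 1) : ℕ) : ℝ) / w ≤ 6 * κ * ε := by
      have hsq : (R : ℝ) ≤ (R : ℝ) ^ 2 := by exact_mod_cast Nat.le_self_pow two_ne_zero R
      rw [div_le_iff₀ hw]
      push_cast
      nlinarith
    have hexp := exp_mul_exp_sub_one_le (by positivity) hε hε₁ hτ
    calc _ ≤ _ := expect_sum_sieveWeight_sq_le hw hwz hR hq hzq hqR c a rfl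
      _ ≤ L * (L + 4 * L * (φ * ε) + ε * L) := by gcongr
      _ = _ := by ring
  obtain ⟨h₁, h₂⟩ := abs_sub_moments_le L.cast_nonneg (by positivity) (by positivity) hfirst hsecond
    (sq_expect_le_expect_sq _ _)
  have hconst : 2 * (2 * κ * ε) + (4 * φ + 1) * ε = momentConst κ * ε := by
    rw [momentConst]
    ring
  rw [hconst] at h₁ h₂
  rcases hj with rfl | rfl
  · simpa only [pow_one] using h₁
  · exact h₂

end Moments

section Scales

open Filter
open scoped Asymptotics

variable {δ ξ x : ℝ}

lemma eventually_const_mul_rpow_log_le (c r : ℝ) {s : ℝ} (hs : 0 < s) :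
    ∀ᶠ x : ℝ in atTop, c * Real.log x ^ r ≤ x ^ s := by
  have hlittle := (isLittleO_log_rpow_rpow_atTop r hs).const_mul_left c
  filter_upwards [hlittle.bound one_pos, eventually_gt_atTop 0] with x hx hx₀
  rw [one_mul, Real.norm_of_nonneg (Real.rpow_nonneg hx₀.le s)] at hx
  exact (le_abs_self _).trans hx

lemma eventually_le_of_two_mul_yy_div_le (hδ : 0 < δ) (c : ℝ) :
    ∀ᶠ x : ℝ in atTop, ∀ H, 2 * (yy δ x : ℝ) / x ≤ H → c ≤ H := by
  filter_upwards [((tendsto_rpow_atTop hδ).comp Real.tendsto_log_atTop).eventually_ge_atTop c,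
    eventually_gt_atTop 0] with x hc hx H hH
  have hy : x * Real.log x ^ δ ≤ yy δ x := Nat.le_ceil _
  calc c ≤ Real.log x ^ δ := hc
    _ ≤ yy δ x / x := by rwa [le_div_iff₀' hx]
    _ ≤ 2 * (yy δ x : ℝ) / x := by
        gcongr
        exact le_mul_of_one_le_left (Nat.cast_nonneg _) one_le_two
    _ ≤ H := hH

lemma eventually_le_rpow_log_of_le_yy_div (hξ : 1 < ξ) :
    ∀ᶠ x : ℝ in atTop, ∀ H, H ≤ (yy δ x : ℝ) / (ξ * zz δ x) → H ≤ Real.log x ^ (1 / 2 : ℝ) := by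
  filter_upwards [(Real.tendsto_log_atTop.comp Real.tendsto_log_atTop).eventually_ge_atTop 1,
    Real.tendsto_log_atTop.eventually_gt_atTop 0] with x hloglog hlog H hH
  rw [Function.comp_apply] at hloglog
  have hs : 0 < Real.log x ^ (1 / 2 : ℝ) := Real.rpow_pos_of_pos hlog _
  refine hH.trans (div_le_of_le_mul₀ ?_ hs.le ?_)
  · rw [zz]
    positivity
  calc (yy δ x : ℝ) ≤ yy δ x * (ξ * Real.log (Real.log x) ^ 2) :=
        le_mul_of_one_le_right (Nat.cast_nonneg _)
          (one_le_mul_of_one_le_of_one_le hξ.le (one_le_pow₀ hloglog))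
    _ = Real.log x ^ (1 / 2 : ℝ) * (ξ * zz δ x) := by
        rw [zz]
        field_simp

lemma eventually_rpow_log_le_zz (δ r : ℝ) : ∀ᶠ x : ℝ in atTop, Real.log x ^ r ≤ zz δ x := by
  filter_upwards [eventually_const_mul_rpow_log_le 1 (r + 1 / 2 - δ) one_pos,
    (Real.tendsto_log_atTop.comp Real.tendsto_log_atTop).eventually_ge_atTop 1,
    Real.tendsto_log_atTop.eventually_gt_atTop 0] with x hx hloglog hlog
  rw [one_mul, Real.rpow_one] at hx
  rw [Function.comp_apply] at hloglog
  have hs : 0 < Real.log x ^ (1 / 2 : ℝ) := Real.rpow_pos_of_pos hlog _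
  rw [zz, le_div_iff₀ hs]
  calc Real.log x ^ r * Real.log x ^ (1 / 2 : ℝ)
      = Real.log x ^ (r + 1 / 2 - δ) * Real.log x ^ δ := by
        rw [← Real.rpow_add hlog, ← Real.rpow_add hlog, sub_add_cancel]
    _ ≤ x * Real.log x ^ δ := by gcongr
    _ ≤ yy δ x := Nat.le_ceil _
    _ ≤ yy δ x * Real.log (Real.log x) ^ 2 :=
        le_mul_of_one_le_right (Nat.cast_nonneg _) (one_le_pow₀ hloglog)

lemma eventually_zz_le_sq (hδ : 0 < δ) : ∀ᶠ x : ℝ in atTop, zz δ x ≤ x ^ 2 := by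
  filter_upwards [eventually_const_mul_rpow_log_le 2 (δ + 2) one_pos, eventually_ge_atTop 1,
    Real.tendsto_log_atTop.eventually_ge_atTop 1] with x hx hx₁ hlog
  have hx₀ : 0 < x := one_pos.trans_le hx₁
  have hlog₀ : 0 < Real.log x := one_pos.trans_le hlog
  have hyy : (yy δ x : ℝ) ≤ 2 * (x * Real.log x ^ δ) :=
    Nat.ceil_le_two_mul <|
      (by norm_num : (2 : ℝ)⁻¹ ≤ 1).trans
        (one_le_mul_of_one_le_of_one_le hx₁ (Real.one_le_rpow hlog hδ.le))
  calc zz δ x ≤ yy δ x * Real.log (Real.log x) ^ 2 :=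
        div_le_self (by positivity) (Real.one_le_rpow hlog (by norm_num))
    _ ≤ 2 * (x * Real.log x ^ δ) * Real.log x ^ 2 := by
        gcongr
        · exact Real.log_nonneg hlog
        · exact Real.log_le_self hx₀.le
    _ = x * (2 * Real.log x ^ (δ + 2)) := by
        rw [Real.rpow_add hlog₀, Real.rpow_two]
        ring
    _ ≤ x * x := by
        rw [Real.rpow_one] at hx
        gcongr
    _ = x ^ 2 := (sq x).symm

lemma sq_le_two_pow {k : ℕ} (hx : 0 < x) (hk : 3 * Real.log x ≤ k) : x ^ 2 ≤ 2 ^ (k + 1) := by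
  rw [← Real.log_le_log_iff (by positivity) (by positivity), Real.log_pow, Real.log_pow]
  push_cast
  nlinarith [Real.log_two_gt_d9]

lemma eventually_inv_sigBetween_zz_le (hδ : 0 < δ) :
    ∀ᶠ x : ℝ in atTop, ∀ w,
      (sigBetween w (zz δ x))⁻¹ ≤ Real.exp (9 + 16 * Real.log (Real.log x)) := by
  filter_upwards [eventually_zz_le_sq hδ, eventually_gt_atTop 0,
    Real.tendsto_log_atTop.eventually_ge_atTop 4] with x hz hx hlog w
  have hceil : (⌈3 * Real.log x⌉₊ : ℝ) ≤ Real.log x ^ 2 := by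
    have := Nat.ceil_lt_add_one (show 0 ≤ 3 * Real.log x by linarith)
    nlinarith
  have hpos : (0 : ℝ) < ⌈3 * Real.log x⌉₊ := by
    exact_mod_cast Nat.ceil_pos.2 (by linarith)
  have hloglog : Real.log ⌈3 * Real.log x⌉₊ ≤ 2 * Real.log (Real.log x) := by
    exact_mod_cast (Real.log_le_log hpos hceil).trans_eq (Real.log_pow _ _)
  exact (inv_sigBetween_le (hz.trans (sq_le_two_pow hx (Nat.le_ceil _)))).trans
    (Real.exp_le_exp.2 (by linarith))

lemma eventually_rpow_half_mul_log_le (c : ℝ) :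
    ∀ᶠ u : ℝ in atTop, c * u ^ (1 / 2 : ℝ) * (9 + 16 * Real.log u) ≤ u / 2 := by
  have hlittle : (fun u : ℝ => 9 + 16 * Real.log u) =o[atTop] fun u => u ^ (1 / 2 : ℝ) :=
    (Asymptotics.isLittleO_const_left.2 <| Or.inr <| tendsto_norm_atTop_atTop.comp <|
      tendsto_rpow_atTop (by norm_num)).add
      ((isLittleO_log_rpow_atTop (by norm_num)).const_mul_left 16)
  have hmul := ((Asymptotics.isBigO_refl (fun u : ℝ => u ^ (1 / 2 : ℝ)) atTop).const_mul_left
    c).mul_isLittleO hlittle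
  filter_upwards [hmul.bound one_half_pos, eventually_gt_atTop 0] with u hu hu₀
  rw [← Real.rpow_add hu₀, add_halves, Real.rpow_one, Real.norm_of_nonneg hu₀.le] at hu
  linarith [(le_abs_self _).trans hu]

lemma eventually_inv_sigBetween_zz_pow_le (hδ : 0 < δ) (c : ℝ) :
    ∀ᶠ x : ℝ in atTop, ∀ w, ∀ R : ℕ, R ≤ c * Real.log x ^ (1 / 2 : ℝ) →
      (sigBetween w (zz δ x) ^ R)⁻¹ ≤ x ^ (1 / 2 : ℝ) := by
  filter_upwards [eventually_inv_sigBetween_zz_le hδ, eventually_gt_atTop 0,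
    Real.tendsto_log_atTop.eventually_ge_atTop 1,
    Real.tendsto_log_atTop.eventually (eventually_rpow_half_mul_log_le c)]
    with x hσ hx hlog hexp w R hR
  have hloglog := Real.log_nonneg hlog
  calc (sigBetween w (zz δ x) ^ R)⁻¹ = (sigBetween w (zz δ x))⁻¹ ^ R := (inv_pow _ _).symm
    _ ≤ Real.exp (9 + 16 * Real.log (Real.log x)) ^ R :=
        pow_le_pow_left₀ (inv_pos.2 (sigBetween_pos _ _)).le (hσ w) R
    _ = Real.exp (R * (9 + 16 * Real.log (Real.log x))) := (Real.exp_nat_mul _ _).symm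
    _ ≤ Real.exp (Real.log x / 2) := by
        refine Real.exp_le_exp.2 (le_trans ?_ hexp)
        gcongr
    _ = x ^ (1 / 2 : ℝ) := by rw [Real.rpow_def_of_pos hx, mul_one_div]

lemma eventually_diagonal_le (hδ : 0 < δ) {c r : ℝ} (hc : 0 ≤ c) (hr : 0 ≤ r) :
    ∀ᶠ x : ℝ in atTop, ∀ w, ∀ R : ℕ, ∀ H, 0 ≤ H → H ≤ Real.log x ^ (1 / 2 : ℝ) → R ≤ c * H →
      (2 * R + 1) * (sigBetween w (zz δ x) ^ R)⁻¹ * H ^ r ≤ yy δ x := by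
  filter_upwards [eventually_inv_sigBetween_zz_pow_le hδ c, eventually_gt_atTop 0,
    Real.tendsto_log_atTop.eventually_ge_atTop 1,
    eventually_const_mul_rpow_log_le (2 * c + 1) (1 / 2 + 1 / 2 * r) one_half_pos]
    with x hσ hx hlog hpow w R H hH₀ hH hR
  have hlog₀ : 0 < Real.log x := one_pos.trans_le hlog
  set v := Real.log x ^ (1 / 2 : ℝ) with hv
  have hv₁ : 1 ≤ v := Real.one_le_rpow hlog (by norm_num)
  have hRv : (R : ℝ) ≤ c * v := hR.trans (by gcongr)
  have hHr : H ^ r ≤ Real.log x ^ (1 / 2 * r) := by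
    rw [Real.rpow_mul hlog₀.le]
    exact Real.rpow_le_rpow hH₀ hH hr
  calc (2 * R + 1) * (sigBetween w (zz δ x) ^ R)⁻¹ * H ^ r
      ≤ (2 * (c * v) + v) * x ^ (1 / 2 : ℝ) * Real.log x ^ (1 / 2 * r) := by
        have := sigBetween_pos w (zz δ x)
        gcongr
        exact hσ w R hRv
    _ = x ^ (1 / 2 : ℝ) * ((2 * c + 1) * Real.log x ^ (1 / 2 + 1 / 2 * r)) := by
        rw [Real.rpow_add hlog₀, ← hv]
        ring
    _ ≤ x ^ (1 / 2 : ℝ) * x ^ (1 / 2 : ℝ) := by gcongr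
    _ = x := by rw [← Real.rpow_add hx, add_halves, Real.rpow_one]
    _ ≤ x * Real.log x ^ δ := le_mul_of_one_le_right hx.le (Real.one_le_rpow hlog hδ.le)
    _ ≤ yy δ x := Nat.le_ceil _

end Scales

section Average

open Finset Filter
open scoped BigOperators

variable {δ ξ x H : ℝ}

lemma lamStar_eq_sieveWeight (M z : ℝ) (K : ℕ) (N b : ℤ) (H : ℝ) (q : ℕ) (n : ℤ) :
    lamStar M z K N b H q n = sieveWeight (H ^ M) z (-N - b) (progression q ⌊K * H⌋₊ n) :=
  rfl

lemma EE_eq_expect (δ x : ℝ) (g : ℤ → ℝ) : EE δ x g = 𝔼 b ∈ range (PP (zz δ x)), g b := by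
  rw [EE, expect_eq_sum_div_card, card_range, one_div_mul_eq_div]

lemma abs_EE_sum_sub_le {ι : Type*} {s : Finset ι} {f : ι → ℤ → ℝ} {A B : ℝ}
    (h : ∀ i ∈ s, |EE δ x (f i) - A| ≤ B) :
    |EE δ x (fun b => ∑ i ∈ s, f i b) - A * #s| ≤ B * #s := by
  have hsplit : EE δ x (fun b => ∑ i ∈ s, f i b) - A * #s = ∑ i ∈ s, (EE δ x (f i) - A) := by
    simp only [EE_eq_expect, expect_sum_comm, sum_sub_distrib, sum_const, nsmul_eq_mul, mul_comm A]
  rw [hsplit, mul_comm B, ← nsmul_eq_mul]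
  exact (abs_sum_le_sum_abs _ _).trans (sum_le_card_nsmul _ _ _ h)

lemma prime_of_mem_QH {q : ℕ} (hq : q ∈ QH δ ξ x H) : q.Prime :=
  (mem_filter.1 hq).2.1

lemma zz_lt_of_mem_QH (hξ : 0 < ξ) (hH₀ : 0 < H) (hz : 0 < zz δ x)
    (hH : H ≤ (yy δ x : ℝ) / (ξ * zz δ x)) {q : ℕ} (hq : q ∈ QH δ ξ x H) : zz δ x < q := by
  refine lt_of_le_of_lt ?_ (mem_filter.1 hq).2.2.1
  rw [le_div_iff₀ (by positivity)] at hH ⊢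
  linarith

lemma mul_floor_le_of_mem_QH (hH₀ : 0 < H) {q : ℕ} (hq : q ∈ QH δ ξ x H) (K : ℕ) :
    q * ⌊(K : ℝ) * H⌋₊ ≤ K * yy δ x := by
  have hqH : (q : ℝ) * H ≤ yy δ x := (le_div_iff₀ hH₀).1 (mem_filter.1 hq).2.2.2
  have h : (q : ℝ) * ⌊(K : ℝ) * H⌋₊ ≤ K * yy δ x :=
    calc (q : ℝ) * ⌊(K : ℝ) * H⌋₊ ≤ q * (K * H) := by
          gcongr
          exact Nat.floor_le (by positivity)
      _ = K * (q * H) := by ring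
      _ ≤ K * yy δ x := by gcongr
  exact_mod_cast h

lemma abs_EE_sum_lamStar_pow_sub_le {M : ℝ} {K : ℕ} (hM : 2 ≤ M) (hH₁ : 1 ≤ H) (hKH : K ≤ H)
    (hwz : H ^ M ≤ zz δ x) {q : ℕ} (hq : q.Prime) (hzq : zz δ x < q)
    (hqR : q * ⌊(K : ℝ) * H⌋₊ ≤ K * yy δ x)
    (hdiag : (2 * ⌊(K : ℝ) * H⌋₊ + 1) * (sigBetween (H ^ M) (zz δ x) ^ ⌊(K : ℝ) * H⌋₊)⁻¹ *
      H ^ (M - 2) ≤ yy δ x) (N : ℤ) {j : ℕ} (hj : j ∈ ({1, 2} : Set ℕ)) :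
    |EE δ x (fun b => (∑ n ∈ Ico (-(yy δ x : ℤ)) ((K * yy δ x : ℕ) : ℤ),
          lamStar M (zz δ x) K N b H q n) ^ j) - ((K + 1) * (yy δ x : ℝ)) ^ j|
      ≤ momentConst (K ^ 2) * (H ^ (M - 2))⁻¹ * ((K + 1) * (yy δ x : ℝ)) ^ j := by
  have hH₀ : 0 < H := one_pos.trans_le hH₁
  have hη : 1 ≤ H ^ (M - 2) := Real.one_le_rpow hH₁ (sub_nonneg.2 hM)
  have hη₀ : 0 < H ^ (M - 2) := one_pos.trans_le hη
  have hsplit : H ^ M = H ^ (M - 2) * H ^ 2 := by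
    rw [← Real.rpow_natCast, ← Real.rpow_add hH₀, Nat.cast_ofNat, sub_add_cancel]
  have hRH : (⌊(K : ℝ) * H⌋₊ : ℝ) ≤ K * H := Nat.floor_le (by positivity)
  have hRw : (⌊(K : ℝ) * H⌋₊ : ℝ) ≤ H ^ M :=
    calc (⌊(K : ℝ) * H⌋₊ : ℝ) ≤ H * H := hRH.trans (by gcongr)
      _ ≤ H ^ (M - 2) * H ^ 2 := by
        rw [← sq]
        exact le_mul_of_one_le_left (sq_nonneg H) hη
      _ = H ^ M := hsplit.symm
  have hRκ : (⌊(K : ℝ) * H⌋₊ : ℝ) ^ 2 ≤ K ^ 2 * (H ^ (M - 2))⁻¹ * H ^ M :=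
    calc (⌊(K : ℝ) * H⌋₊ : ℝ) ^ 2 ≤ (K * H) ^ 2 := by gcongr
      _ = K ^ 2 * (H ^ (M - 2))⁻¹ * H ^ M := by
        rw [hsplit]
        field_simp
  have hL : ((K : ℝ) + 1) * yy δ x = ((K + 1) * yy δ x : ℕ) := by push_cast; ring
  have hIco : ((K * yy δ x : ℕ) : ℤ) = -(yy δ x : ℤ) + ((K + 1) * yy δ x : ℕ) := by
    push_cast
    ring
  have hdiagL : (2 * ⌊(K : ℝ) * H⌋₊ + 1) * (sigBetween (H ^ M) (zz δ x) ^ ⌊(K : ℝ) * H⌋₊)⁻¹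
      ≤ (H ^ (M - 2))⁻¹ * ((K + 1) * yy δ x : ℕ) := by
    rw [inv_mul_eq_div, le_div_iff₀ hη₀, ← hL]
    exact hdiag.trans (le_mul_of_one_le_left (Nat.cast_nonneg _) (by simp))
  simp only [EE_eq_expect, lamStar_eq_sieveWeight]
  rw [hL, hIco]
  exact abs_expect_sum_sieveWeight_pow_sub_le (sq_nonneg _) (inv_nonneg.2 hη₀.le)
    (inv_le_one_of_one_le₀ hη) (by positivity) hwz hRw hRκ hq hzq
    (hqR.trans (Nat.mul_le_mul_right _ K.le_succ)) hdiagL (-N) _ hj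

theorem stmt4_general (δ M : ℝ) (K : ℕ) (ξ : ℝ) (hδ : 0 < δ) (hξ : 1 < ξ) (hM : 2 ≤ M) :
    ∃ C : ℝ, 0 < C ∧ ∃ x₀ : ℝ, ∀ x ≥ x₀, ∀ N : ℤ, ∀ H, 2 * (yy δ x : ℝ) / x ≤ H →
      H ≤ (yy δ x : ℝ) / (ξ * zz δ x) → ∀ j ∈ ({1, 2} : Set ℕ),
      |EE δ x (fun b => ∑ q ∈ QH δ ξ x H,
            (∑ n ∈ Ico (-(yy δ x : ℤ)) ((K * yy δ x : ℕ) : ℤ),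
              lamStar M (zz δ x) K N b H q n) ^ j) -
          (((K : ℝ) + 1) * (yy δ x : ℝ)) ^ j * ((QH δ ξ x H).card : ℝ)| ≤
        C * (((K : ℝ) + 1) * (yy δ x : ℝ)) ^ j * ((QH δ ξ x H).card : ℝ) / H ^ (M - 2) := by
  obtain ⟨x₀, hx₀⟩ := eventually_atTop.1 <|
    (eventually_le_of_two_mul_yy_div_le hδ (K + 1)).and <|
    (eventually_le_rpow_log_of_le_yy_div (δ := δ) hξ).and <|
    (eventually_rpow_log_le_zz δ (1 / 2 * M)).and <|
    (eventually_diagonal_le hδ K.cast_nonneg (sub_nonneg.2 hM)).and <|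
    Real.tendsto_log_atTop.eventually_ge_atTop 0
  refine ⟨momentConst (K ^ 2), momentConst_pos (sq_nonneg _), x₀, fun x hx N H hlow hup j hj => ?_⟩
  obtain ⟨hlarge, hsmall, hzz, hdiag, hlog⟩ := hx₀ x hx
  have hKH : (K : ℝ) + 1 ≤ H := hlarge H hlow
  have hH₁ : 1 ≤ H := le_trans (by simp) hKH
  have hH₀ : 0 < H := one_pos.trans_le hH₁
  have hwz : H ^ M ≤ zz δ x :=
    calc H ^ M ≤ (Real.log x ^ (1 / 2 : ℝ)) ^ M :=
          Real.rpow_le_rpow hH₀.le (hsmall H hup) (by linarith)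
      _ = Real.log x ^ (1 / 2 * M) := (Real.rpow_mul hlog _ _).symm
      _ ≤ zz δ x := hzz
  have hz : 0 < zz δ x := (Real.rpow_pos_of_pos hH₀ M).trans_le hwz
  refine (abs_EE_sum_sub_le fun q hq => abs_EE_sum_lamStar_pow_sub_le hM hH₁ (by linarith) hwz
    (prime_of_mem_QH hq) (zz_lt_of_mem_QH (one_pos.trans hξ) hH₀ hz hup hq)
    (mul_floor_le_of_mem_QH hH₀ hq K)
    (hdiag _ _ H hH₀.le (hsmall H hup) (Nat.floor_le (by positivity))) N hj).trans_eq ?_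
  ring

end Average

theorem stmt4 (δ M : ℝ) (K : ℕ) (ξ : ℝ)
    (hδ0 : 0 < δ) (hδ1 : δ < 1/2) (hK : 2 ≤ K) (hξ : 1 < ξ) (hM : 2 ≤ M) :
    ∃ C : ℝ, 0 < C ∧ ∃ x₀ : ℝ, ∀ x ≥ x₀, ∀ N : ℤ, ∀ H ∈ frakH2 δ ξ x, ∀ j ∈ ({1, 2} : Set ℕ),
      |EE δ x (fun b => ∑ q ∈ QH δ ξ x H,
            (∑ n ∈ Finset.Ico (-(yy δ x : ℤ)) ((K * yy δ x : ℕ) : ℤ),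
              lamStar M (zz δ x) K N b H q n) ^ j) -
          (((K : ℝ) + 1) * (yy δ x : ℝ)) ^ j * ((QH δ ξ x H).card : ℝ)| ≤
        C * (((K : ℝ) + 1) * (yy δ x : ℝ)) ^ j * ((QH δ ξ x H).card : ℝ) / H ^ (M - 2) := by
  obtain ⟨C, hC, x₀, h⟩ := stmt4_general δ M K ξ hδ0 hξ hM
  exact ⟨C, hC, x₀, fun x hx N H ⟨_, _, _, hlow, hup⟩ j hj => h x hx N H hlow hup j hj⟩
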